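/- Let B be a type with the discrete topology, let ℕ → B carry the product topology, let A : Set B be countable, equip ↥A with the discrete topology and ℕ → ↥A with the product topology, and let ι : (ℕ → ↥A) → (ℕ → B) be the map x ↦ (fun n => (x n : B)). If S ⊆ (ℕ → ↥A) is a Gδ set in ℕ → ↥A (a countable intersection of open sets), then there exists a doubly indexed family F : ℕ → ℕ → Set (ℕ → B) of sets closed in ℕ → B such that ι '' S = ⋂ i, ⋃ j, F i j. (A Π⁰₂ set of A^ω lands in Π⁰₃ — countable intersections of countable unions of closed sets — when the alphabet is expanded to B.) -/

import Mathlib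

/-!
A closed subset of `A^ω` is the trace on `A^ω` of a closed subset of `B^ω`, so every `Fσδ` subset
of `A^ω` is the trace of an `Fσδ` subset of `B^ω`. Tracing means intersecting with the copy of
`A^ω` inside `B^ω`, which is the countable intersection of the conditions `x n ∈ A` and therefore
`Fσδ` as soon as `A` is. For discrete `B`, the set `A` is closed, and `A^ω` is metrizable, so its
`Gδ` subsets are `Fσδ`.
-/

open Set Topology

/-- `Fσδ` sets, the class `Π⁰₃` of the Borel hierarchy: countable intersections of countable unions
of closed sets. Both families are indexed by `ℕ`; this loses no generality, since `∅` and `univ`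
are closed and finite families can be padded. -/
def IsFσδ {X : Type*} [TopologicalSpace X] (s : Set X) : Prop :=
  ∃ F : ℕ → ℕ → Set X, (∀ i j, IsClosed (F i j)) ∧ s = ⋂ i, ⋃ j, F i j

namespace IsFσδ

variable {X Y : Type*} [TopologicalSpace X] [TopologicalSpace Y]

theorem of_isClosed {s : Set X} (hs : IsClosed s) : IsFσδ s :=
  ⟨fun _ _ => s, fun _ _ => hs, by simp only [iUnion_const, iInter_const]⟩

theorem iUnion_of_isClosed {ι : Type*} [Countable ι] {F : ι → Set X} (hF : ∀ i, IsClosed (F i)) :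
    IsFσδ (⋃ i, F i) := by
  cases isEmpty_or_nonempty ι with
  | inl _ => simpa only [iUnion_of_empty] using of_isClosed isClosed_empty
  | inr _ =>
    obtain ⟨g, hg⟩ := exists_surjective_nat ι
    exact ⟨fun _ j => F (g j), fun _ j => hF (g j), by rw [iInter_const, hg.iUnion_comp]⟩

theorem of_isOpen [PerfectlyNormalSpace X] {s : Set X} (hs : IsOpen s) : IsFσδ s := by
  obtain ⟨V, hV, hsV⟩ := hs.isClosed_compl.isGδ.eq_iInter_nat
  have hs_eq : s = ⋃ j, (V j)ᶜ := by rw [← compl_iInter, ← hsV, compl_compl]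
  rw [hs_eq]
  exact iUnion_of_isClosed fun j => (hV j).isClosed_compl

theorem iInter {ι : Type*} [Countable ι] {s : ι → Set X} (hs : ∀ i, IsFσδ (s i)) :
    IsFσδ (⋂ i, s i) := by
  choose F hF hsF using hs
  cases isEmpty_or_nonempty ι with
  | inl _ => simpa only [iInter_of_empty] using of_isClosed isClosed_univ
  | inr _ =>
    obtain ⟨g, hg⟩ := exists_surjective_nat (ι × ℕ)
    refine ⟨fun k => F (g k).1 (g k).2, fun k => hF _ _, ?_⟩
    calc ⋂ i, s i = ⋂ i, ⋂ n, ⋃ j, F i n j := iInter_congr hsF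
      _ = ⋂ p : ι × ℕ, ⋃ j, F p.1 p.2 j :=
        (iInf_prod (f := fun p : ι × ℕ => ⋃ j, F p.1 p.2 j)).symm
      _ = ⋂ k, ⋃ j, F (g k).1 (g k).2 j := (hg.iInter_comp _).symm

theorem inter {s t : Set X} (hs : IsFσδ s) (ht : IsFσδ t) : IsFσδ (s ∩ t) := by
  rw [inter_eq_iInter]
  exact iInter (Bool.forall_bool.2 ⟨ht, hs⟩)

theorem of_isGδ [PerfectlyNormalSpace X] {s : Set X} (hs : IsGδ s) : IsFσδ s := by
  obtain ⟨U, hU, rfl⟩ := hs.eq_iInter_nat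
  exact iInter fun i => of_isOpen (hU i)

theorem preimage {f : X → Y} {t : Set Y} (ht : IsFσδ t) (hf : Continuous f) :
    IsFσδ (f ⁻¹' t) := by
  obtain ⟨F, hF, rfl⟩ := ht
  exact ⟨fun i j => f ⁻¹' F i j, fun i j => (hF i j).preimage hf, by
    simp only [preimage_iInter, preimage_iUnion]⟩

theorem exists_preimage_eq_of_isInducing {f : X → Y} {s : Set X} (hs : IsFσδ s)
    (hf : IsInducing f) : ∃ t, IsFσδ t ∧ f ⁻¹' t = s := by
  obtain ⟨F, hF, rfl⟩ := hs
  choose G hG hGF using fun i j => hf.isClosed_iff.1 (hF i j)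
  exact ⟨⋂ i, ⋃ j, G i j, ⟨G, hG, rfl⟩, by simp only [preimage_iInter, preimage_iUnion, hGF]⟩

theorem image_of_isInducing {f : X → Y} {s : Set X} (hs : IsFσδ s) (hf : IsInducing f)
    (hrange : IsFσδ (range f)) : IsFσδ (f '' s) := by
  obtain ⟨t, ht, rfl⟩ := hs.exists_preimage_eq_of_isInducing hf
  rw [image_preimage_eq_inter_range]
  exact ht.inter hrange

theorem univ_pi {ι : Type*} [Countable ι] {Z : ι → Type*} [∀ i, TopologicalSpace (Z i)]
    {t : ∀ i, Set (Z i)} (ht : ∀ i, IsFσδ (t i)) : IsFσδ (univ.pi t) := by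
  rw [univ_pi_eq_iInter]
  exact iInter fun i => (ht i).preimage (continuous_apply i)

theorem image_piMap {ι : Type*} [Countable ι] {Z W : ι → Type*} [∀ i, TopologicalSpace (Z i)]
    [∀ i, TopologicalSpace (W i)] {f : ∀ i, Z i → W i} {s : Set (∀ i, Z i)} (hs : IsFσδ s)
    (hf : ∀ i, IsInducing (f i)) (hrange : ∀ i, IsFσδ (range (f i))) :
    IsFσδ (Pi.map f '' s) :=
  hs.image_of_isInducing (.piMap hf) (by rw [range_piMap]; exact univ_pi hrange)

end IsFσδ

theorem pi02_lands_in_pi03_general {B : Type*} [TopologicalSpace B] {A : Set B} (hA : IsFσδ A)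
    {S : Set (ℕ → ↥A)} (hS : IsFσδ S) :
    IsFσδ ((fun (x : ℕ → ↥A) (n : ℕ) => (x n : B)) '' S) :=
  hS.image_piMap (fun _ => .subtypeVal) fun _ => by rwa [Subtype.range_coe]

theorem pi02_lands_in_pi03
    (B : Type*) [TopologicalSpace B] [DiscreteTopology B] (A : Set B)
    (hA : A.Countable) (S : Set (ℕ → ↥A)) (U : ℕ → Set (ℕ → ↥A))
    (hU : ∀ i, IsOpen (U i)) (hS : S = ⋂ i, U i) :
    ∃ F : ℕ → ℕ → Set (ℕ → B), (∀ i j, IsClosed (F i j)) ∧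
      (fun (x : ℕ → ↥A) (n : ℕ) => (x n : B)) '' S = ⋂ i, ⋃ j, F i j := by
  have hSδ : IsGδ S := hS ▸ .iInter_of_isOpen hU
  exact pi02_lands_in_pi03_general (.of_isClosed (isClosed_discrete A)) (.of_isGδ hSδ)
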